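/- For every β > 0 one has the inclusions R_{β+} ⊆ R*_β ⊆ R_β, where R_{β+} = ⋃_{γ>β} R_γ. That is: (i) every finite Borel measure on 𝕋 that is γ-regular for some γ > β belongs to R*_β; (ii) every measure in R*_β is β-regular. -/

import Mathlib

open MeasureTheory Real Filter Set

noncomputable section

instance : Fact (0 < 2 * π) := ⟨by positivity⟩

/-- `u ↦ |sin(u/2)|`, as a function on the circle. -/
def sinHalfAbs : AddCircle (2 * π) → ℝ :=
  Function.Periodic.lift (f := fun u => |Real.sin (u / 2)|)
    (fun x => by
      have h : (x + 2 * π) / 2 = x / 2 + π := by ring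
      simp only [h, Real.sin_add_pi, abs_neg])

/-- The `β`-energy `I_β(σ) = ∬ |sin((t−s)/2)|^{−β} dσ(t) dσ(s)`. -/
def rieszEnergy (β : ℝ) (σ : Measure (AddCircle (2 * π))) : ENNReal :=
  ∫⁻ t, ∫⁻ s, (ENNReal.ofReal (sinHalfAbs (t - s))) ^ (-β) ∂σ ∂σ

/-- `σ` is `β`-regular: `σ = Σ σ_i` with `σ_i` restrictions of `σ` to pairwise disjoint
Borel sets and `I_β(σ_i) < ∞` for every `i`. -/
def rieszRegular (β : ℝ) (σ : Measure (AddCircle (2 * π))) : Prop :=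
  ∃ A : ℕ → Set (AddCircle (2 * π)), (∀ i, MeasurableSet (A i)) ∧
    (Pairwise fun i j => Disjoint (A i) (A j)) ∧
    σ = Measure.sum (fun i => σ.restrict (A i)) ∧
    (∀ i, rieszEnergy β (σ.restrict (A i)) < ⊤)

/-- `σ ∈ R*_β`: for every `ε > 0` there are `γ > β` and a compact `K` with `σ(Kᶜ) < ε` such
that the lower local dimension of `σ|_K` is at least `γ` at every point of `K`. -/
def rieszRegularStar (β : ℝ) (σ : Measure (AddCircle (2 * π))) : Prop :=
  ∀ ε : ℝ, 0 < ε → ∃ γ : ℝ, β < γ ∧ ∃ K : Set (AddCircle (2 * π)), IsCompact K ∧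
    σ Kᶜ < ENNReal.ofReal ε ∧
    ∀ x ∈ K, γ ≤ Filter.liminf
      (fun r : ℝ => Real.log ((σ.restrict K) (Metric.ball x r)).toReal / Real.log r)
      (nhdsWithin 0 (Set.Ioi 0))

/-- Removing from a measure space the sets of small remaining measure, until every set of the
family that still meets the rest has large measure in the rest. -/
theorem exists_biUnion_le_tsum_and_lt_diff {X ι : Type*} [MeasurableSpace X] [Countable ι]
    (μ : Measure X) (U : ι → Set X) (w : ι → ENNReal) :
    ∃ S : Set ι, μ (⋃ i ∈ S, U i) ≤ ∑' i, w i ∧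
      ∀ i ∉ S, w i < μ (U i \ ⋃ j ∈ S, U j) := by
  obtain ⟨S, -, hS, hmax⟩ := zorn_subset_nonempty
    {S : Set ι | μ (⋃ i ∈ S, U i) ≤ ∑' i : S, w i} (fun c hc hchain hne => by
      refine ⟨⋃₀ c, ?_, fun s hs => subset_sUnion_of_mem hs⟩
      have heq : (⋃ i ∈ ⋃₀ c, U i) = ⋃ F : Finset ι, ⋃ i ∈ (F : Set ι) ∩ ⋃₀ c, U i := by
        ext x
        simp only [mem_iUnion]
        constructor
        · rintro ⟨i, hi, hx⟩
          exact ⟨{i}, i, ⟨by simp, hi⟩, hx⟩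
        · rintro ⟨F, i, hi, hx⟩
          exact ⟨i, hi.2, hx⟩
      have hdir : Directed (· ⊆ ·)
          fun F : Finset ι => ⋃ i ∈ (F : Set ι) ∩ ⋃₀ c, U i := by
        apply Monotone.directed_le
        intro F G hFG
        exact biUnion_subset_biUnion_left (inter_subset_inter_left _ (by simpa using hFG))
      rw [mem_ofPred_eq, heq, hdir.measure_iUnion]
      refine iSup_le fun F => ?_
      obtain ⟨T, hT, hFT⟩ := hchain.directedOn.exists_mem_subset_of_finite_of_subset_sUnion hne
        (F.finite_toSet.inter_of_left (⋃₀ c)) inter_subset_right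
      exact (measure_mono (biUnion_subset_biUnion_left hFT)).trans <| (hc hT).trans <|
        ENNReal.tsum_mono_subtype w (subset_sUnion_of_mem hT)) ∅ (by simp)
  refine ⟨S, le_trans hS (ENNReal.tsum_comp_le_tsum_of_injective Subtype.val_injective w), ?_⟩
  intro i hi
  by_contra! hlt
  refine hi (hmax (y := insert i S) ?_ (subset_insert i S) (mem_insert i S))
  have hsum : ∑' j : (insert i S : Set ι), w j = w i + ∑' j : S, w j := by
    rw [← Set.singleton_union, ENNReal.summable.tsum_union_disjoint (by simpa using hi)
      ENNReal.summable]
    simp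
  change μ (⋃ j ∈ insert i S, U j) ≤ ∑' j : (insert i S : Set ι), w j
  rw [hsum, biUnion_insert, ← sdiff_union_self]
  exact (measure_union_le _ _).trans (add_le_add hlt hS)

theorem eventually_le_rpow_of_lt_liminf {m : ℝ → ℝ} (hm : ∀ r, 0 ≤ m r) {α : ℝ} (hα : 0 < α)
    (h : α < liminf (fun r => log (m r) / log r) (nhdsWithin 0 (Ioi 0))) :
    ∀ᶠ r in nhdsWithin 0 (Ioi 0), m r ≤ r ^ α := by
  rw [liminf_eq] at h
  have hne : {a | ∀ᶠ r in nhdsWithin (0 : ℝ) (Ioi 0), a ≤ log (m r) / log r}.Nonempty := by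
    by_contra hemp
    rw [not_nonempty_iff_eq_empty] at hemp
    rw [hemp, Real.sSup_empty] at h
    exact h.not_gt hα
  obtain ⟨a, ha, hαa⟩ := exists_lt_of_lt_csSup hne h
  filter_upwards [ha, Ioo_mem_nhdsGT (zero_lt_one' ℝ)] with r hr hr01
  rcases (hm r).eq_or_lt with h0 | h0
  · rw [← h0]
    exact rpow_nonneg hr01.1.le _
  · rw [le_rpow_iff_log_le h0 hr01.1]
    exact (le_div_iff_of_neg (log_neg hr01.1 hr01.2)).1 (hαa.le.trans hr)

/-- The polynomial lower bound along a sequence is what bounds the quotient from above, so that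
the real-valued `liminf` is meaningful. -/
theorem le_liminf_log_div_log {m : ℝ → ℝ} (hmono : Monotone m) {γ α C a c : ℝ} (hγ : γ < α)
    (hC : 0 < C) (ha : 0 < a) (hc : 0 < c)
    (hup : ∀ᶠ r in nhdsWithin 0 (Ioi 0), m r ≤ C * r ^ α)
    (hlow : ∀ n : ℕ, c / (n + 1) ^ 3 ≤ m (a / (n + 1))) :
    γ ≤ liminf (fun r => log (m r) / log r) (nhdsWithin 0 (Ioi 0)) := by
  have hseq : Tendsto (fun n : ℕ => a / ((n : ℝ) + 1)) atTop (nhdsWithin 0 (Ioi 0)) := by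
    refine tendsto_nhdsWithin_iff.2 ⟨?_, Eventually.of_forall fun n => ?_⟩
    · exact tendsto_const_nhds.div_atTop
        (tendsto_atTop_add_const_right _ _ tendsto_natCast_atTop_atTop)
    · exact mem_Ioi.2 (by positivity)
  have hpos : ∀ r, 0 < r → 0 < m r := by
    intro r hr
    obtain ⟨n, hn⟩ := (hseq.eventually (Ioo_mem_nhdsGT hr)).exists
    exact (by positivity : 0 < c / ((n : ℝ) + 1) ^ 3).trans_le ((hlow n).trans (hmono hn.2.le))
  have hlogn : Tendsto (fun n : ℕ => log ((n : ℝ) + 1)) atTop atTop :=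
    tendsto_log_atTop.comp (tendsto_atTop_add_const_right _ _ tendsto_natCast_atTop_atTop)
  refine le_liminf_of_le (IsCoboundedUnder.of_frequently_le (a := 4)
    (hseq.frequently (Eventually.frequently ?_))) ?_
  · filter_upwards [hlogn.eventually_ge_atTop (4 * log a - log c),
      hlogn.eventually_gt_atTop (log a)] with n h1 h2
    have hn : (0 : ℝ) < n + 1 := by positivity
    have hlr : log (a / (n + 1)) = log a - log (n + 1) := log_div ha.ne' hn.ne'
    have hlm : log c - 3 * log (n + 1) ≤ log (m (a / (n + 1))) := by
      have := log_le_log (by positivity) (hlow n)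
      rwa [log_div hc.ne' (by positivity), log_pow] at this
    rw [div_le_iff_of_neg (by linarith)]
    linarith
  · have hlog : Tendsto (fun r => (α - γ) * log r) (nhdsWithin 0 (Ioi 0)) atBot :=
      tendsto_log_nhdsGT_zero.const_mul_atBot (sub_pos.2 hγ)
    filter_upwards [hup, Ioo_mem_nhdsGT (zero_lt_one' ℝ),
      hlog.eventually_le_atBot (- log C)] with r h1 h2 h3
    rw [le_div_iff_of_neg (log_neg h2.1 h2.2)]
    have := log_le_log (hpos r h2.1) h1
    rw [log_mul hC.ne' (rpow_pos_of_pos h2.1 _).ne', log_rpow h2.1] at this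
    linarith

theorem exists_coe_eq_and_norm_eq_abs (u : AddCircle (2 * π)) :
    ∃ x : ℝ, (x : AddCircle (2 * π)) = u ∧ |x| ≤ π ∧ ‖u‖ = |x| := by
  have hu : u ∈ ((↑) : ℝ → AddCircle (2 * π)) '' Ioc (-π) (-π + 2 * π) := by
    rw [AddCircle.coe_image_Ioc_eq]
    trivial
  obtain ⟨x, hx, rfl⟩ := hu
  have hxπ : |x| ≤ π := abs_le.2 ⟨hx.1.le, by linarith [hx.2]⟩
  refine ⟨x, rfl, hxπ, (AddCircle.norm_coe_eq_abs_iff _ two_pi_pos.ne').2 ?_⟩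
  rw [abs_of_pos two_pi_pos]
  linarith

theorem sinHalfAbs_coe (x : ℝ) : sinHalfAbs (x : AddCircle (2 * π)) = |sin (x / 2)| := rfl

theorem continuous_sinHalfAbs : Continuous sinHalfAbs := by
  refine continuous_coinduced_dom.2 ?_
  change Continuous fun x : ℝ => |sin (x / 2)|
  fun_prop

theorem sinHalfAbs_le_norm (u : AddCircle (2 * π)) : sinHalfAbs u ≤ ‖u‖ := by
  obtain ⟨x, rfl, -, hx⟩ := exists_coe_eq_and_norm_eq_abs u
  rw [sinHalfAbs_coe, hx]
  have h := abs_sin_le_abs (x := x / 2)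
  rw [abs_div, abs_two] at h
  linarith [abs_nonneg x]

theorem norm_div_pi_le_sinHalfAbs (u : AddCircle (2 * π)) : ‖u‖ / π ≤ sinHalfAbs u := by
  obtain ⟨x, rfl, hxπ, hx⟩ := exists_coe_eq_and_norm_eq_abs u
  rw [sinHalfAbs_coe, hx]
  have h := mul_abs_le_abs_sin (x := x / 2) (by rw [abs_div, abs_two]; linarith)
  rw [abs_div, abs_two] at h
  calc |x| / π = 2 / π * (|x| / 2) := by ring
    _ ≤ _ := h

/-- The potential `x ↦ ∫ |sin((x−s)/2)|^{−β} dσ(s)`. -/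
def rieszPotential (β : ℝ) (σ : Measure (AddCircle (2 * π))) (x : AddCircle (2 * π)) : ENNReal :=
  ∫⁻ s, (ENNReal.ofReal (sinHalfAbs (x - s))) ^ (-β) ∂σ

theorem measurable_rieszPotential (β : ℝ) (σ : Measure (AddCircle (2 * π))) [SFinite σ] :
    Measurable (rieszPotential β σ) := by
  refine Measurable.lintegral_prod_right'
    (f := fun p : AddCircle (2 * π) × AddCircle (2 * π) =>
      (ENNReal.ofReal (sinHalfAbs (p.1 - p.2))) ^ (-β)) ?_
  have h : Continuous fun p : AddCircle (2 * π) × AddCircle (2 * π) => sinHalfAbs (p.1 - p.2) :=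
    continuous_sinHalfAbs.comp (continuous_fst.sub continuous_snd)
  exact h.measurable.ennreal_ofReal.pow_const _

theorem rieszEnergy_mono (β : ℝ) {σ τ : Measure (AddCircle (2 * π))} (h : σ ≤ τ) :
    rieszEnergy β σ ≤ rieszEnergy β τ :=
  lintegral_mono' h fun _ => lintegral_mono' h le_rfl

theorem ennreal_rpow_neg_le_rpow_neg {a b : ENNReal} {β : ℝ} (hβ : 0 ≤ β) (hab : a ≤ b) :
    b ^ (-β) ≤ a ^ (-β) := by
  rw [ENNReal.rpow_neg, ENNReal.rpow_neg, ENNReal.inv_le_inv]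
  exact ENNReal.rpow_le_rpow hab hβ

theorem measure_ball_le_rieszPotential_mul {γ : ℝ} (hγ : 0 < γ) (σ : Measure (AddCircle (2 * π)))
    (x : AddCircle (2 * π)) {r : ℝ} (hr : 0 < r) :
    σ (Metric.ball x r) ≤ rieszPotential γ σ x * ENNReal.ofReal (r ^ γ) := by
  have hle : (ENNReal.ofReal r) ^ (-γ) * σ (Metric.ball x r) ≤ rieszPotential γ σ x := by
    rw [← setLIntegral_const]
    refine (setLIntegral_mono' Metric.isOpen_ball.measurableSet fun s hs => ?_).trans
      (setLIntegral_le_lintegral _ _)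
    refine ennreal_rpow_neg_le_rpow_neg (by linarith) (ENNReal.ofReal_le_ofReal ?_)
    refine (sinHalfAbs_le_norm _).trans ?_
    rw [← dist_eq_norm, dist_comm]
    exact (Metric.mem_ball.1 hs).le
  have h0 : ENNReal.ofReal r ≠ 0 := by simpa using hr
  calc σ (Metric.ball x r)
      = (ENNReal.ofReal r) ^ (-γ) * σ (Metric.ball x r) * (ENNReal.ofReal r) ^ γ := by
        rw [mul_right_comm, ← ENNReal.rpow_add _ _ h0 ENNReal.ofReal_ne_top]
        simp
    _ ≤ rieszPotential γ σ x * ENNReal.ofReal (r ^ γ) := by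
        rw [← ENNReal.ofReal_rpow_of_pos hr]
        gcongr

theorem rieszPotential_lt_top {β α C : ℝ} (hβ : 0 < β) (hα : β < α)
    (ν : Measure (AddCircle (2 * π))) (x : AddCircle (2 * π))
    (h : ∀ r, 0 < r → ν (Metric.ball x r) ≤ ENNReal.ofReal (C * r ^ α)) :
    rieszPotential β ν x < ⊤ := by
  set ρ : ℕ → ℝ := fun k => 4 * (1 / 2) ^ k with hρ
  have hρpos : ∀ k, 0 < ρ k := fun k => by positivity
  have hρlim : Tendsto ρ atTop (nhds 0) := by
    simpa [hρ] using (tendsto_pow_atTop_nhds_zero_of_lt_one (r := (1 / 2 : ℝ))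
      (by norm_num) (by norm_num)).const_mul 4
  have hsing : ν {x} = 0 := by
    have hlim : Tendsto (fun k => ENNReal.ofReal (C * ρ k ^ α)) atTop (nhds 0) := by
      have h1 : Tendsto (fun k => C * ρ k ^ α) atTop (nhds 0) := by
        have := (hρlim.rpow_const (p := α) (Or.inr (by linarith))).const_mul C
        rwa [zero_rpow (by linarith), mul_zero] at this
      simpa using ENNReal.tendsto_ofReal h1
    refine le_antisymm (ge_of_tendsto' hlim fun k => ?_) bot_le
    exact (measure_mono (singleton_subset_iff.2 (Metric.mem_ball_self (hρpos k)))).trans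
      (h _ (hρpos k))
  set b : ℕ → ℝ := fun k => (ρ (k + 1) / π) ^ (-β) with hb
  have hle : ∀ᵐ s ∂ν, (ENNReal.ofReal (sinHalfAbs (x - s))) ^ (-β) ≤
      ∑' k, (Metric.ball x (ρ k)).indicator (fun _ => ENNReal.ofReal (b k)) s := by
    have hne : ∀ᵐ s ∂ν, s ≠ x := by
      rw [ae_iff]
      simpa using hsing
    filter_upwards [hne] with s hs
    have hdpos : 0 < dist s x := dist_pos.2 hs
    have hd4 : dist s x < 4 := by
      rw [dist_eq_norm]
      obtain ⟨y, -, hy, hn⟩ := exists_coe_eq_and_norm_eq_abs (s - x)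
      linarith [pi_lt_four]
    obtain ⟨k, hk1, hk2⟩ : ∃ k, dist s x < ρ k ∧ ρ (k + 1) ≤ dist s x := by
      by_contra! hcon
      have hall : ∀ k, dist s x < ρ k := fun k => by
        induction k with
        | zero => simpa [hρ] using hd4
        | succ k ih => exact hcon k ih
      exact (ge_of_tendsto' hρlim fun k => (hall k).le).not_gt hdpos
    refine le_trans ?_ (ENNReal.le_tsum k)
    rw [indicator_of_mem (Metric.mem_ball.2 hk1), hb,
      ← ENNReal.ofReal_rpow_of_pos (div_pos (hρpos _) pi_pos)]
    refine ennreal_rpow_neg_le_rpow_neg (by linarith) (ENNReal.ofReal_le_ofReal ?_)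
    refine le_trans ?_ (norm_div_pi_le_sinHalfAbs _)
    rw [← dist_eq_norm, dist_comm]
    gcongr
  set q : ℝ := (1 / 2) ^ (α - β) with hq
  have hq0 : 0 ≤ q := by positivity
  have hq1 : q < 1 := rpow_lt_one (by norm_num) (by norm_num) (by linarith)
  have hterm : ∀ k, b k * (C * ρ k ^ α) = (2 * π)⁻¹ ^ (-β) * C * 4 ^ (α - β) * q ^ k := by
    intro k
    have h1 : ρ (k + 1) / π = (2 * π)⁻¹ * ρ k := by
      simp only [hρ, pow_succ]
      field_simp
    have h2 : q ^ k = ((1 / 2) ^ k) ^ (α - β) := by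
      rw [hq, ← rpow_natCast, ← rpow_natCast, ← rpow_mul (by norm_num),
        ← rpow_mul (by norm_num), mul_comm]
    have h3 : ρ k ^ (α - β) = 4 ^ (α - β) * q ^ k := by
      rw [h2, ← mul_rpow (by norm_num) (by positivity)]
    have h4 : ρ k ^ (α - β) = ρ k ^ (-β) * ρ k ^ α := by
      rw [← rpow_add (hρpos k), neg_add_eq_sub]
    rw [hb]
    simp only
    rw [h1, mul_rpow (by positivity) (hρpos k).le, mul_assoc _ _ (q ^ k), ← h3, h4]
    ring
  calc rieszPotential β ν x
      ≤ ∫⁻ s, ∑' k, (Metric.ball x (ρ k)).indicator (fun _ => ENNReal.ofReal (b k)) s ∂ν :=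
        lintegral_mono_ae hle
    _ = ∑' k, ENNReal.ofReal (b k) * ν (Metric.ball x (ρ k)) := by
        rw [lintegral_tsum fun k =>
          (measurable_const.indicator Metric.isOpen_ball.measurableSet).aemeasurable]
        simp_rw [lintegral_indicator_const Metric.isOpen_ball.measurableSet]
    _ ≤ ∑' k, ENNReal.ofReal (b k * (C * ρ k ^ α)) := by
        refine ENNReal.tsum_le_tsum fun k => ?_
        rw [ENNReal.ofReal_mul (by positivity)]
        gcongr
        exact h _ (hρpos k)
    _ < ⊤ := by
        have hs : Summable fun k => b k * (C * ρ k ^ α) := by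
          simp_rw [hterm]
          exact (summable_geometric_of_lt_one hq0 hq1).mul_left _
        exact lt_top_iff_ne_top.2 hs.tsum_ofReal_ne_top

theorem rieszRegular_of_countable_cover {β : ℝ} {σ : Measure (AddCircle (2 * π))}
    (E : ℕ → Set (AddCircle (2 * π))) (hE : ∀ i, MeasurableSet (E i)) (hcov : σ (⋃ i, E i)ᶜ = 0)
    (hfin : ∀ i, rieszEnergy β (σ.restrict (E i)) < ⊤) : rieszRegular β σ := by
  have hmeas : ∀ i, MeasurableSet (disjointed E i) := fun i => MeasurableSet.disjointed hE i
  refine ⟨disjointed E, hmeas, disjoint_disjointed E, ?_, fun i => ?_⟩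
  · rw [← Measure.restrict_iUnion (disjoint_disjointed E) hmeas, iUnion_disjointed,
      Measure.restrict_eq_self_of_ae_mem]
    exact mem_ae_iff.2 hcov
  · exact (rieszEnergy_mono β (Measure.restrict_mono_set σ (disjointed_subset E i))).trans_lt
      (hfin i)

theorem rieszEnergy_restrict_sublevel_lt_top {β : ℝ} {σ : Measure (AddCircle (2 * π))}
    [IsFiniteMeasure σ] {K : Set (AddCircle (2 * π))} (hK : MeasurableSet K) (m : ℕ) :
    rieszEnergy β (σ.restrict (K ∩ {x | rieszPotential β (σ.restrict K) x ≤ m})) < ⊤ := by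
  have hmeas : MeasurableSet (K ∩ {x | rieszPotential β (σ.restrict K) x ≤ m}) :=
    hK.inter (measurableSet_le (measurable_rieszPotential β _) measurable_const)
  calc rieszEnergy β (σ.restrict (K ∩ {x | rieszPotential β (σ.restrict K) x ≤ m}))
      ≤ ∫⁻ _ in K ∩ {x | rieszPotential β (σ.restrict K) x ≤ m}, (m : ENNReal) ∂σ := by
        refine setLIntegral_mono' hmeas fun x hx => le_trans ?_ hx.2
        exact lintegral_mono' (Measure.restrict_mono_set σ inter_subset_left) le_rfl
    _ < ⊤ := setLIntegral_const_lt_top _ (ENNReal.natCast_ne_top m)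

theorem rieszPotential_lt_top_of_lt_liminf {β γ : ℝ} (hβ : 0 < β) (hγ : β < γ)
    (ν : Measure (AddCircle (2 * π))) [IsFiniteMeasure ν] (x : AddCircle (2 * π))
    (h : γ ≤ liminf (fun r : ℝ => log (ν (Metric.ball x r)).toReal / log r)
      (nhdsWithin 0 (Ioi 0))) :
    rieszPotential β ν x < ⊤ := by
  obtain ⟨α, hβα, hαγ⟩ := exists_between hγ
  have hev := eventually_le_rpow_of_lt_liminf (m := fun r => (ν (Metric.ball x r)).toReal)
    (fun _ => ENNReal.toReal_nonneg) (hβ.trans hβα) (hαγ.trans_le h)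
  obtain ⟨δ, hδ, hsub⟩ := mem_nhdsGT_iff_exists_Ioo_subset.1 hev
  have hδ : 0 < δ := hδ
  set M : ℝ := (ν univ).toReal with hM
  have hM0 : 0 ≤ M := ENNReal.toReal_nonneg
  refine rieszPotential_lt_top (α := α) (C := 1 + M / δ ^ α) hβ hβα ν x fun r hr => ?_
  rw [← ENNReal.ofReal_toReal (measure_ne_top ν (Metric.ball x r))]
  refine ENNReal.ofReal_le_ofReal ?_
  have hrα : 0 < r ^ α := rpow_pos_of_pos hr α
  have hδα : 0 < δ ^ α := rpow_pos_of_pos hδ α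
  have hq : 0 ≤ M / δ ^ α := by positivity
  rcases lt_or_ge r δ with hrδ | hrδ
  · refine (hsub ⟨hr, hrδ⟩ : (ν (Metric.ball x r)).toReal ≤ r ^ α).trans ?_
    nlinarith
  · have h1 : (ν (Metric.ball x r)).toReal ≤ M :=
      ENNReal.toReal_mono (measure_ne_top ν _) (measure_mono (subset_univ _))
    have h2 : M ≤ M / δ ^ α * r ^ α := by
      rw [div_mul_eq_mul_div, le_div_iff₀ hδα]
      exact mul_le_mul_of_nonneg_left
        (rpow_le_rpow hδ.le hrδ (hβ.trans hβα).le) hM0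
    nlinarith

theorem rieszRegular_of_rieszRegularStar {β : ℝ} (hβ : 0 < β) {σ : Measure (AddCircle (2 * π))}
    [IsFiniteMeasure σ] (h : rieszRegularStar β σ) : rieszRegular β σ := by
  choose γ hγ K hK hKσ hdim using fun n : ℕ => h (1 / ((n : ℝ) + 1)) (by positivity)
  let E : ℕ × ℕ → Set (AddCircle (2 * π)) := fun p =>
    K p.1 ∩ {x | rieszPotential β (σ.restrict (K p.1)) x ≤ p.2}
  have hEK : ∀ n, K n ⊆ ⋃ p, E p := fun n x hx => by
    obtain ⟨m, hm⟩ := ENNReal.exists_nat_gt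
      (rieszPotential_lt_top_of_lt_liminf hβ (hγ n) _ x (hdim n x hx)).ne
    exact mem_iUnion.2 ⟨(n, m), hx, hm.le⟩
  refine rieszRegular_of_countable_cover (fun i => E (Nat.pairEquiv.symm i))
    (fun i => ?_) ?_ fun i => rieszEnergy_restrict_sublevel_lt_top (hK _).measurableSet _
  · exact (hK _).measurableSet.inter
      (measurableSet_le (measurable_rieszPotential β _) measurable_const)
  · rw [Nat.pairEquiv.symm.surjective.iUnion_comp E]
    have hlim : Tendsto (fun n : ℕ => ENNReal.ofReal (1 / ((n : ℝ) + 1))) atTop (nhds 0) := by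
      simpa using ENNReal.tendsto_ofReal tendsto_one_div_add_atTop_nhds_zero_nat
    exact le_antisymm (ge_of_tendsto' hlim fun n =>
      (measure_mono (compl_subset_compl.2 (hEK n))).trans (hKσ n).le) bot_le

/-- Every compact set can be shrunk slightly so that the measure of balls centred in it decays at
most polynomially along a sequence of radii. -/
theorem exists_isCompact_subset_le_measure_ball (σ : Measure (AddCircle (2 * π)))
    {K : Set (AddCircle (2 * π))} (hK : IsCompact K) {ε : ℝ} (hε : 0 < ε) :
    ∃ K' ⊆ K, IsCompact K' ∧ σ (K \ K') ≤ ENNReal.ofReal ε ∧ ∃ c : ℝ, 0 < c ∧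
      ∀ x ∈ K', ∀ n : ℕ, ENNReal.ofReal (c / (n + 1) ^ 3) ≤
        σ.restrict K' (Metric.ball x (8 * π / (n + 1))) := by
  have hsum : Summable fun n : ℕ => 1 / ((n : ℝ) + 1) ^ 2 := by
    exact_mod_cast (summable_nat_add_iff 1).2 (summable_one_div_nat_pow (p := 2).2 one_lt_two)
  set Z : ℝ := ∑' n : ℕ, 1 / ((n : ℝ) + 1) ^ 2 with hZ
  have hZ0 : 0 ≤ Z := tsum_nonneg fun n => by positivity
  set c : ℝ := ε / (Z + 1) with hc
  have hc0 : 0 < c := by positivity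
  let U : (Σ n : ℕ, Fin (n + 1)) → Set (AddCircle (2 * π)) := fun p =>
    Metric.ball ((2 * π * (p.2 : ℕ) / (p.1 + 1) : ℝ) : AddCircle (2 * π)) (4 * π / (p.1 + 1))
  let w : (Σ n : ℕ, Fin (n + 1)) → ENNReal := fun p => ENNReal.ofReal (c / (p.1 + 1) ^ 3)
  have hw : ∑' p, w p ≤ ENNReal.ofReal ε := by
    have hlevel : ∀ n : ℕ, ∑' k : Fin (n + 1), w ⟨n, k⟩ =
        ENNReal.ofReal (c * (1 / ((n : ℝ) + 1) ^ 2)) := fun n => by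
      rw [tsum_fintype]
      simp only [w]
      rw [Finset.sum_const, Finset.card_univ, Fintype.card_fin, nsmul_eq_mul,
        ← ENNReal.ofReal_natCast, ← ENNReal.ofReal_mul (by positivity)]
      congr 1
      push_cast
      field_simp
    rw [ENNReal.tsum_sigma']
    simp_rw [hlevel]
    rw [← ENNReal.ofReal_tsum_of_nonneg (fun n => by positivity) (hsum.mul_left c),
      tsum_mul_left, ← hZ]
    refine ENNReal.ofReal_le_ofReal ?_
    rw [hc, div_mul_eq_mul_div, div_le_iff₀ (by positivity)]
    nlinarith
  have hcover : ∀ (x : AddCircle (2 * π)) (n : ℕ), ∃ k : Fin (n + 1), x ∈ U ⟨n, k⟩ := by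
    intro x n
    have hx : x ∈ ((↑) : ℝ → AddCircle (2 * π)) '' Ico 0 (0 + 2 * π) := by
      rw [AddCircle.coe_image_Ico_eq]
      trivial
    obtain ⟨t, ht, rfl⟩ := hx
    have hn : (0 : ℝ) < n + 1 := by positivity
    have hs0 : 0 ≤ t * (n + 1) / (2 * π) := by
      have := ht.1
      positivity
    have hs1 : t * (n + 1) / (2 * π) < (n + 1 : ℕ) := by
      rw [div_lt_iff₀ two_pi_pos]
      push_cast
      nlinarith [ht.2]
    refine ⟨⟨⌊t * (n + 1) / (2 * π)⌋₊, (Nat.floor_lt hs0).2 hs1⟩, ?_⟩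
    have hfl := Nat.floor_le hs0
    have hfl' := Nat.lt_floor_add_one (t * (n + 1) / (2 * π))
    rw [le_div_iff₀ two_pi_pos] at hfl
    rw [div_lt_iff₀ two_pi_pos] at hfl'
    refine Metric.mem_ball.2 ?_
    rw [dist_eq_norm, ← AddCircle.coe_sub]
    refine (QuotientAddGroup.norm_mk_le_norm).trans_lt ?_
    rw [Real.norm_eq_abs, abs_lt]
    constructor
    · rw [neg_lt_sub_iff_lt_add, ← sub_lt_iff_lt_add', ← sub_div, div_lt_iff₀ hn]
      nlinarith [pi_pos]
    · rw [sub_lt_iff_lt_add, ← add_div, lt_div_iff₀ hn]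
      nlinarith [pi_pos]
  obtain ⟨S, hS, hSw⟩ := exists_biUnion_le_tsum_and_lt_diff (σ.restrict K) U w
  have hopen : IsOpen (⋃ p ∈ S, U p) := isOpen_biUnion fun p _ => Metric.isOpen_ball
  refine ⟨K \ ⋃ p ∈ S, U p, sdiff_subset, hK.diff hopen, ?_, c, hc0, fun x hx n => ?_⟩
  · rw [sdiff_sdiff_right_self, inter_comm, ← Measure.restrict_apply hopen.measurableSet]
    exact hS.trans hw
  · obtain ⟨k, hk⟩ := hcover x n
    have hkS : (⟨n, k⟩ : Σ n : ℕ, Fin (n + 1)) ∉ S := fun hmem =>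
      hx.2 (mem_biUnion hmem hk)
    refine (hSw _ hkS).le.trans ?_
    rw [Measure.restrict_apply (Metric.isOpen_ball.measurableSet.diff hopen.measurableSet),
      Measure.restrict_apply Metric.isOpen_ball.measurableSet]
    refine measure_mono fun y hy => ⟨?_, hy.2, hy.1.2⟩
    have h1 := Metric.mem_ball.1 hy.1.1
    have h2 := Metric.mem_ball'.1 hk
    refine Metric.mem_ball.2 ((dist_triangle _ _ _).trans_lt ((add_lt_add h1 h2).trans_eq ?_))
    ring

theorem rieszRegularStar_of_rieszRegular {β γ : ℝ} (hβ : 0 < β) (hγ : β < γ)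
    {σ : Measure (AddCircle (2 * π))} [IsFiniteMeasure σ] (h : rieszRegular γ σ) :
    rieszRegularStar β σ := by
  intro ε hε
  obtain ⟨A, hA, hdisj, hsum, hfin⟩ := h
  obtain ⟨γ', hβγ', hγ'⟩ := exists_between hγ
  let G : ℕ → Set (AddCircle (2 * π)) := fun i =>
    A i ∩ {x | rieszPotential γ (σ.restrict (A i)) x < ⊤}
  have hG : ∀ i, MeasurableSet (G i) := fun i =>
    (hA i).inter (measurableSet_lt (measurable_rieszPotential γ _) measurable_const)
  have hGσ : σ (⋃ i, G i)ᶜ = 0 := by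
    rw [hsum, Measure.sum_apply_eq_zero' (MeasurableSet.iUnion hG).compl]
    intro i
    have hae : ∀ᵐ x ∂σ.restrict (A i), rieszPotential γ (σ.restrict (A i)) x < ⊤ :=
      ae_lt_top (measurable_rieszPotential γ _) (hfin i).ne
    refine mem_ae_iff.1 ?_
    filter_upwards [hae, ae_restrict_mem (hA i)] with x hx hxA
    exact mem_iUnion.2 ⟨i, hxA, hx⟩
  obtain ⟨δ, hδ, hδsum⟩ := ENNReal.exists_pos_sum_of_countable'
    (ENNReal.ofReal_pos.2 (half_pos hε)).ne' ℕ
  choose K hKG hK hKσ using fun i =>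
    (hG i).exists_isCompact_sdiff_lt (μ := σ) (measure_ne_top σ _) (hδ i).ne'
  have hKtot : σ (⋃ i, K i)ᶜ < ENNReal.ofReal (ε / 2) := by
    calc σ (⋃ i, K i)ᶜ ≤ σ ((⋃ i, G i)ᶜ ∪ ⋃ i, G i \ K i) := by
          refine measure_mono fun x hx => ?_
          by_cases hxG : x ∈ ⋃ i, G i
          · obtain ⟨i, hi⟩ := mem_iUnion.1 hxG
            exact Or.inr (mem_iUnion.2 ⟨i, hi, fun hxK => hx (mem_iUnion.2 ⟨i, hxK⟩)⟩)
          · exact Or.inl hxG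
      _ ≤ 0 + ∑' i, δ i := by
          refine (measure_union_le _ _).trans (add_le_add hGσ.le ?_)
          exact (measure_iUnion_le _).trans (ENNReal.tsum_le_tsum fun i => (hKσ i).le)
      _ < _ := by rwa [zero_add]
  have hcomp : ∀ N, IsCompact (accumulate K N) := fun N => by
    rw [accumulate_def]
    exact (finite_Iic N).isCompact_biUnion fun i _ => hK i
  obtain ⟨N, hN⟩ : ∃ N, σ (accumulate K N)ᶜ < ENNReal.ofReal (ε / 2) := by
    have hlim : Tendsto (fun N => σ (accumulate K N)ᶜ) atTop (nhds (σ (⋂ N, (accumulate K N)ᶜ))) :=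
      tendsto_measure_iInter_atTop
        (fun N => (hcomp N).measurableSet.compl.nullMeasurableSet)
        (fun m n hmn => compl_subset_compl.2 (monotone_accumulate hmn)) ⟨0, measure_ne_top σ _⟩
    rw [← compl_iUnion, iUnion_accumulate] at hlim
    exact (hlim.eventually_lt_const hKtot).exists
  obtain ⟨K', hK'sub, hK', hK'σ, c, hc, hlow⟩ :=
    exists_isCompact_subset_le_measure_ball σ (hcomp N) (half_pos hε)
  refine ⟨γ', hβγ', K', hK', ?_, fun x hx => ?_⟩
  · calc σ K'ᶜ ≤ σ ((accumulate K N)ᶜ ∪ accumulate K N \ K') := by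
          refine measure_mono fun y hy => ?_
          by_cases hyK : y ∈ accumulate K N
          · exact Or.inr ⟨hyK, hy⟩
          · exact Or.inl hyK
      _ ≤ σ (accumulate K N)ᶜ + σ (accumulate K N \ K') := measure_union_le _ _
      _ < ENNReal.ofReal (ε / 2) + ENNReal.ofReal (ε / 2) :=
          ENNReal.add_lt_add_of_lt_of_le (measure_ne_top σ _) hN hK'σ
      _ = ENNReal.ofReal ε := by
          rw [← ENNReal.ofReal_add (by positivity) (by positivity), add_halves]
  obtain ⟨i, -, hxi⟩ := mem_accumulate.1 (hK'sub hx)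
  set P := rieszPotential γ (σ.restrict (A i)) x with hP
  have hPtop : P < ⊤ := (hKG i hxi).2
  have hnear : ∀ᶠ r in nhdsWithin (0 : ℝ) (Ioi 0), Metric.ball x r ∩ K' ⊆ A i := by
    let T : Set (AddCircle (2 * π)) := ⋃ j ∈ Iic N \ {i}, K j
    have hT : IsClosed T := ((finite_Iic N).sdiff.isCompact_biUnion fun j _ => hK j).isClosed
    have hxT : x ∉ T := fun hxT => by
      obtain ⟨j, hj, hxj⟩ := mem_iUnion₂.1 hxT
      exact disjoint_left.1 (hdisj hj.2) (hKG j hxj).1 (hKG i hxi).1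
    obtain ⟨ρ, hρ, hball⟩ := Metric.isOpen_iff.1 hT.isOpen_compl x hxT
    filter_upwards [Ioo_mem_nhdsGT hρ] with r hr y hy
    obtain ⟨j, hjN, hyj⟩ := mem_accumulate.1 (hK'sub hy.2)
    by_cases hji : j = i
    · exact hji ▸ (hKG j hyj).1
    · exact absurd (mem_biUnion (show j ∈ Iic N \ {i} from ⟨hjN, hji⟩) hyj)
        (hball (Metric.ball_subset_ball hr.2.le hy.1))
  refine le_liminf_log_div_log (m := fun r => (σ.restrict K' (Metric.ball x r)).toReal)
    (C := P.toReal + 1) (a := 8 * π) (c := c) ?_ hγ' (by positivity) (by positivity) hc ?_ ?_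
  · exact fun r s hrs => ENNReal.toReal_mono (measure_ne_top _ _)
      (measure_mono (Metric.ball_subset_ball hrs))
  · filter_upwards [hnear, self_mem_nhdsWithin] with r hr hr0
    have hr0 : 0 < r := hr0
    have hrγ : 0 < r ^ γ := rpow_pos_of_pos hr0 γ
    have hle : σ.restrict K' (Metric.ball x r) ≤ P * ENNReal.ofReal (r ^ γ) := by
      refine le_trans ?_ (measure_ball_le_rieszPotential_mul (hβ.trans hγ) _ x hr0)
      rw [Measure.restrict_apply Metric.isOpen_ball.measurableSet,
        Measure.restrict_apply Metric.isOpen_ball.measurableSet]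
      exact measure_mono fun y hy => ⟨hy.1, hr hy⟩
    have hreal := ENNReal.toReal_mono (ENNReal.mul_ne_top hPtop.ne ENNReal.ofReal_ne_top) hle
    rw [ENNReal.toReal_mul, ENNReal.toReal_ofReal hrγ.le] at hreal
    linarith
  · intro n
    have hreal := ENNReal.toReal_mono (measure_ne_top _ _) (hlow x hx n)
    rwa [ENNReal.toReal_ofReal (by positivity)] at hreal

/-- For every `β > 0`: `R_{β+} ⊆ R*_β ⊆ R_β`, i.e. (i) every finite Borel
measure that is `γ`-regular for some `γ > β` belongs to `R*_β`; (ii) every measure in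
`R*_β` is `β`-regular. -/
theorem stmt_19 (β : ℝ) (hβ : 0 < β)
    (σ : Measure (AddCircle (2 * π))) [IsFiniteMeasure σ] :
    ((∃ γ : ℝ, β < γ ∧ rieszRegular γ σ) → rieszRegularStar β σ) ∧
    (rieszRegularStar β σ → rieszRegular β σ) := by
  exact ⟨fun ⟨_, hγ, h⟩ => rieszRegularStar_of_rieszRegular hβ hγ h,
    rieszRegular_of_rieszRegularStar hβ⟩
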